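/- Let K be a field of characteristic zero, A_n(K) the Weyl algebra with a fixed partition of {1,…,n} into blocks of sizes n_1,…,n_p, and M a left A_n(K)-module generated by finitely many elements f_1,…,f_m, with the p-dimensional filtration M_{r_1,…,r_p} = Σ_{i=1}^m W_{r_1,…,r_p} f_i. Then there exists a numerical polynomial φ_M(t_1,…,t_p) in p variables such that φ_M(r_1,…,r_p) = dim_K M_{r_1,…,r_p} for all sufficiently large (r_1,…,r_p) ∈ ℤ^p, and n_i ≤ deg_{t_i} φ_M ≤ 2n_i for i = 1,…,p (hence n ≤ deg φ_M ≤ 2n). -/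

import Mathlib

set_option synthInstance.maxHeartbeats 400000
set_option maxHeartbeats 1000000

open MvPolynomial

noncomputable def weylGens (n : ℕ) (K : Type) [Field K] :
    Set (Module.End K (MvPolynomial (Fin n) K)) :=
  (Set.range fun i : Fin n =>
      (LinearMap.mulLeft K (X i : MvPolynomial (Fin n) K) : Module.End K (MvPolynomial (Fin n) K))) ∪
  (Set.range fun i : Fin n => ((pderiv i).toLinearMap : Module.End K (MvPolynomial (Fin n) K)))

noncomputable def WeylAlg (n : ℕ) (K : Type) [Field K] :
    Subalgebra K (Module.End K (MvPolynomial (Fin n) K)) :=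
  Algebra.adjoin K (weylGens n K)

noncomputable def wx (n : ℕ) (K : Type) [Field K] (i : Fin n) : WeylAlg n K :=
  ⟨LinearMap.mulLeft K (X i), Algebra.subset_adjoin (Set.mem_union_left _ ⟨i, rfl⟩)⟩

noncomputable def wd (n : ℕ) (K : Type) [Field K] (i : Fin n) : WeylAlg n K :=
  ⟨(pderiv i).toLinearMap, Algebra.subset_adjoin (Set.mem_union_right _ ⟨i, rfl⟩)⟩

noncomputable def wMono (n : ℕ) (K : Type) [Field K] (α β : Fin n → ℕ) : WeylAlg n K :=
  (((List.finRange n).map fun i => wx n K i ^ α i).prod) *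
  (((List.finRange n).map fun i => wd n K i ^ β i).prod)

def ordTot (n : ℕ) (α β : Fin n → ℕ) : ℕ := (∑ i, α i) + ∑ i, β i

noncomputable def bernW (n : ℕ) (K : Type) [Field K] (r : ℤ) : Submodule K (WeylAlg n K) :=
  Submodule.span K {D | ∃ α β : Fin n → ℕ, (ordTot n α β : ℤ) ≤ r ∧ D = wMono n K α β}

noncomputable def modFil (n : ℕ) (K : Type) [Field K] (M : Type) [AddCommGroup M]
    [Module K M] [Module (WeylAlg n K) M] (m : ℕ) (g : Fin m → M) (r : ℤ) :
    Submodule K M :=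
  Submodule.span K {x | ∃ i, ∃ D ∈ bernW n K r, x = D • g i}


/-- A polynomial in `p` variables with rational coefficients is numerical if it takes
integer values for all sufficiently large integer arguments. -/
def IsNumerical {p : ℕ} (f : MvPolynomial (Fin p) ℚ) : Prop :=
  ∃ s : Fin p → ℤ, ∀ r : Fin p → ℤ, (∀ i, s i ≤ r i) →
    ∃ z : ℤ, MvPolynomial.eval (fun i => (r i : ℚ)) f = (z : ℚ)

/-- The `j`-th order of the monomial `x^α ∂^β` with respect to the partition `B`. -/
def ordBlk {n p : ℕ} (B : Fin n → Fin p) (α β : Fin n → ℕ) (j : Fin p) : ℕ :=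
  ∑ i ∈ Finset.univ.filter (fun i => B i = j), (α i + β i)

/-- The component `W_{r_1,…,r_p}` of the `p`-dimensional filtration of the Weyl algebra. -/
noncomputable def bernWB (n p : ℕ) (K : Type) [Field K] (B : Fin n → Fin p)
    (r : Fin p → ℤ) : Submodule K (WeylAlg n K) :=
  Submodule.span K
    {D | ∃ α β : Fin n → ℕ, (∀ j, (ordBlk B α β j : ℤ) ≤ r j) ∧ D = wMono n K α β}

/-- The component `M_{r_1,…,r_p} = Σ_i W_{r_1,…,r_p} g_i` of the induced filtration of `M`. -/
noncomputable def modFilB (n p : ℕ) (K : Type) [Field K] (B : Fin n → Fin p)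
    (M : Type) [AddCommGroup M] [Module K M] [Module (WeylAlg n K) M]
    (m : ℕ) (g : Fin m → M) (r : Fin p → ℤ) : Submodule K M :=
  Submodule.span K {x | ∃ i, ∃ D ∈ bernWB n p K B r, x = D • g i}

section PartA
variable {p : ℕ} {σ : Type} [Fintype σ]

/-- multidegree -/
def dg (dd : σ → Fin p) (a : σ → ℕ) (j : Fin p) : ℕ := ∑ s, if dd s = j then a s else 0

lemma dg_add (dd : σ → Fin p) (a b : σ → ℕ) : dg dd (a + b) = dg dd a + dg dd b := by
  funext j
  simp only [dg, Pi.add_apply, ← Finset.sum_add_distrib]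
  exact Finset.sum_congr rfl fun s _ => by split_ifs <;> simp

lemma dg_single [DecidableEq σ] (dd : σ → Fin p) (s : σ) :
    dg dd (Pi.single s 1) = Pi.single (dd s) 1 := by
  funext j
  simp only [dg, Pi.single_apply]
  rw [Finset.sum_eq_single s]
  · simp [eq_comm]
  · intro b _ hb; simp [hb]
  · simp

lemma dg_mono (dd : σ → Fin p) {a b : σ → ℕ} (h : a ≤ b) : dg dd a ≤ dg dd b := by
  intro j
  exact Finset.sum_le_sum fun s _ => by split_ifs <;> simp [h s]

lemma le_dg (dd : σ → Fin p) (a : σ → ℕ) (s : σ) : a s ≤ dg dd a (dd s) := by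
  have := Finset.single_le_sum (f := fun t => if dd t = dd s then a t else 0)
    (fun _ _ => Nat.zero_le _) (Finset.mem_univ s)
  simpa [dg] using this

open Classical in
noncomputable def Fset (dd : σ → Fin p) (r : Fin p → ℕ) : Finset (σ → ℕ) :=
  (Fintype.piFinset (fun s => Finset.range (r (dd s) + 1))).filter (fun a => dg dd a = r)

lemma mem_Fset (dd : σ → Fin p) (r : Fin p → ℕ) (a : σ → ℕ) : a ∈ Fset dd r ↔ dg dd a = r := by
  classical
  simp only [Fset, Finset.mem_filter, Fintype.mem_piFinset, Finset.mem_range, and_iff_right_iff_imp]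
  rintro rfl s
  have := le_dg dd a s
  omega

lemma card_antidiag {F : Type} [Fintype F] [DecidableEq F] (N k : ℕ) (h : Fintype.card F = N + 1) :
    (Finset.piAntidiag (Finset.univ : Finset F) k).card = (k + N).choose N := by
  rw [← Finset.map_sym_eq_piAntidiag, Finset.card_map]
  have : (Finset.univ : Finset F).sym k = Finset.univ := by ext; simp
  rw [this, Finset.card_univ, Sym.card_sym_eq_multichoose, h, Nat.multichoose_eq, show N + 1 + k - 1 = k + N by omega, Nat.choose_symm_add]

lemma card_Fset (dd : σ → Fin p) (N : Fin p → ℕ)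
    (hN : ∀ j, Nat.card {s // dd s = j} = N j + 1) (r : Fin p → ℕ) :
    (Fset dd r).card = ∏ j, (r j + N j).choose (N j) := by
  classical
  have : (Fset dd r).card = (Fintype.piFinset (fun j =>
      Finset.piAntidiag (Finset.univ : Finset {s // dd s = j}) (r j))).card := by
    refine Finset.card_bij (fun a _ j s => a s.1) ?_ ?_ ?_
    · intro a ha
      rw [mem_Fset] at ha
      simp only [Fintype.mem_piFinset, Finset.mem_piAntidiag]
      intro j
      refine ⟨?_, by simp⟩
      rw [← ha, dg, ← Finset.sum_filter]
      exact (Finset.sum_subtype _ (by simp) a).symm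
    · intro a _ b _ h
      funext s
      exact congrFun (congrFun h (dd s)) ⟨s, rfl⟩
    · intro b hb
      simp only [Fintype.mem_piFinset, Finset.mem_piAntidiag] at hb
      refine ⟨fun s => b (dd s) ⟨s, rfl⟩, ?_, ?_⟩
      · rw [mem_Fset]
        funext j
        rw [← (hb j).1, dg, ← Finset.sum_filter]
        rw [Finset.sum_subtype (p := fun s => dd s = j) _ (by simp)]
        refine Finset.sum_congr rfl ?_
        rintro ⟨s, rfl⟩ _
        rfl
      · funext j ⟨s, hs⟩
        subst hs
        rfl
  rw [this, Fintype.card_piFinset]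
  refine Finset.prod_congr rfl fun j _ => ?_
  apply card_antidiag
  rw [← Nat.card_eq_fintype_card, hN]

lemma card_Fset_ge [DecidableEq (σ → ℕ)] (dd : σ → Fin p) (c : σ → ℕ) (r : Fin p → ℕ) (h : dg dd c ≤ r)
    [DecidablePred fun a => c ≤ a] :
    ((Fset dd r).filter (fun a => c ≤ a)).card = (Fset dd (r - dg dd c)).card := by
  symm
  refine Finset.card_bij (fun a _ => a + c) ?_ ?_ ?_
  · intro a ha
    rw [mem_Fset] at ha
    rw [Finset.mem_filter, mem_Fset, dg_add, ha]
    exact ⟨tsub_add_cancel_of_le h, le_add_self⟩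
  · intro a _ b _ h
    exact add_right_cancel h
  · intro b hb
    rw [Finset.mem_filter, mem_Fset] at hb
    refine ⟨b - c, ?_, tsub_add_cancel_of_le hb.2⟩
    rw [mem_Fset]
    have : dg dd (b - c) + dg dd c = r := by
      rw [← dg_add, tsub_add_cancel_of_le hb.2, hb.1]
    rw [← this, add_tsub_cancel_right]

lemma upper_of_step [DecidableEq σ] (P : (σ → ℕ) → Prop)
    (hP : ∀ a s, P a → P (a + Pi.single s 1)) {a b : σ → ℕ} (hab : a ≤ b) (ha : P a) : P b := by
  obtain ⟨c, rfl⟩ := exists_add_of_le hab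
  clear hab
  generalize hk : ∑ s, c s = k
  induction k generalizing c with
  | zero =>
    have : c = 0 := by
      funext s
      exact (Finset.sum_eq_zero_iff.1 hk) s (Finset.mem_univ s)
    simpa [this] using ha
  | succ k ih =>
    obtain ⟨s, hs⟩ : ∃ s, c s ≠ 0 := by
      by_contra! h
      simp [h] at hk
    have hc : c = (c - Pi.single s 1) + Pi.single s 1 := by
      refine (tsub_add_cancel_of_le ?_).symm
      intro t
      by_cases h : t = s
      · subst h; simp; omega
      · simp [h]
    rw [hc, ← add_assoc]
    apply hP
    apply ih
    rw [hc] at hk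
    simp only [Pi.add_apply, Finset.sum_add_distrib] at hk
    have : ∑ t, (Pi.single s 1 : σ → ℕ) t = 1 := by simp
    omega

lemma exists_gens (P : (σ → ℕ) → Prop) (hP : ∀ a b, a ≤ b → P a → P b) :
    ∃ G : Finset (σ → ℕ), ∀ b, P b ↔ ∃ a ∈ G, a ≤ b := by
  have hf : {a | Minimal P a}.Finite :=
    WellQuasiOrderedLE.finite_of_isAntichain (setOfPred_minimal_antichain P)
  refine ⟨hf.toFinset, fun b => ⟨fun hb => ?_, ?_⟩⟩
  · obtain ⟨a, h1, h2⟩ := exists_minimal_le_of_wellFoundedLT P b hb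
    exact ⟨a, by simpa using h2, h1⟩
  · rintro ⟨a, ha, hab⟩
    have : Minimal P a := by simpa using ha
    exact hP a b hab this.prop

lemma degreeOf_aeval_X (Q : Polynomial ℚ) (i j : Fin p) :
    (Polynomial.aeval (X j : MvPolynomial (Fin p) ℚ) Q).degreeOf i ≤
      if j = i then Q.natDegree else 0 := by
  rw [Polynomial.aeval_eq_sum_range]
  refine (degreeOf_sum_le _ _ _).trans ?_
  refine Finset.sup_le fun k hk => ?_
  rw [MvPolynomial.smul_eq_C_mul]
  refine (degreeOf_C_mul_le _ _ _).trans ?_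
  split_ifs with h
  · subst h
    rw [degreeOf_X_self_pow]
    simp at hk; omega
  · rw [degreeOf_X_pow_of_ne _ (Ne.symm h)]

theorem hilb_count (dd : σ → Fin p) (N : Fin p → ℕ)
    (hN : ∀ j, Nat.card {s // dd s = j} = N j + 1)
    (P : (σ → ℕ) → Prop) [DecidablePred P] (hP : ∀ a b, a ≤ b → P a → P b) :
    ∃ φ : MvPolynomial (Fin p) ℚ, (∀ j, φ.degreeOf j ≤ N j) ∧ ∃ s : Fin p → ℕ, ∀ r, s ≤ r →
      eval (fun i => (r i : ℚ)) φ = (((Fset dd r).filter (fun a => ¬ P a)).card : ℚ) := by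
  classical
  obtain ⟨G, hG⟩ := exists_gens P hP
  let c : Finset (σ → ℕ) → (σ → ℕ) := fun T => T.sup id
  let ψ : (σ → ℕ) → MvPolynomial (Fin p) ℚ := fun c =>
    ∏ j, Polynomial.aeval (X j) (Polynomial.preHilbertPoly ℚ (N j) (dg dd c j))
  refine ⟨∑ T ∈ G.powerset, C ((-1) ^ T.card) * ψ (c T), ?_, dg dd (c G), ?_⟩
  · intro i
    refine (degreeOf_sum_le _ _ _).trans (Finset.sup_le fun T _ => ?_)
    refine (degreeOf_C_mul_le _ _ _).trans ?_
    refine (degreeOf_prod_le _ _ _).trans ?_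
    refine (Finset.sum_le_sum fun j _ => degreeOf_aeval_X _ i j).trans ?_
    simp [Polynomial.natDegree_preHilbertPoly]
  · intro r hr
    rw [map_sum]
    have key : ∀ a, (if ¬ P a then (1 : ℚ) else 0) =
        ∑ T ∈ G.powerset, (-1) ^ T.card * (if c T ≤ a then 1 else 0) := by
      intro a
      have h1 : (if ¬ P a then (1 : ℚ) else 0) = ∏ x ∈ G, (1 + (-1) * if x ≤ a then 1 else 0) := by
        split_ifs with h
        · symm
          rw [hG] at h
          obtain ⟨x, hx, hxa⟩ := h
          exact Finset.prod_eq_zero hx (by simp [hxa])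
        · symm
          rw [hG] at h
          push Not at h
          refine Finset.prod_eq_one fun x hx => ?_
          simp [h x hx]
      rw [h1, Finset.prod_one_add]
      refine Finset.sum_congr rfl fun T _ => ?_
      rw [Finset.prod_mul_distrib, Finset.prod_const]
      congr 1
      rw [Finset.prod_ite_zero]
      simp [c]
    rw [← Finset.sum_boole]
    rw [Finset.sum_congr rfl fun a _ => key a, Finset.sum_comm]
    refine Finset.sum_congr rfl fun T hT => ?_
    rw [← Finset.mul_sum, Finset.sum_boole, map_mul, eval_C]
    congr 1
    have hle : dg dd (c T) ≤ r :=
      (dg_mono dd (Finset.sup_mono (Finset.mem_powerset.1 hT))).trans hr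
    rw [card_Fset_ge dd (c T) r hle, card_Fset dd N hN, map_prod, Nat.cast_prod]
    refine Finset.prod_congr rfl fun j _ => ?_
    rw [Pi.sub_apply, ← Polynomial.preHilbertPoly_eq_choose_sub_add ℚ (N j) (hle j)]
    rw [← Polynomial.eval₂_id (p := Polynomial.preHilbertPoly ℚ (N j) (dg dd (c T) j)), Polynomial.aeval_def, Polynomial.hom_eval₂]
    simp

end PartA

section PartB

def lpr {n : ℕ} {E : Type} [Ring E] (f : Fin n → E) (α : Fin n → ℕ) : E :=
  ((List.finRange n).map fun i => f i ^ α i).prod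

lemma lpr_zero {n : ℕ} {E : Type} [Ring E] (f : Fin n → E) : lpr f 0 = 1 := by
  simp [lpr]

lemma list_commute {n : ℕ} {E : Type} [Ring E] (f : Fin n → E) (α : Fin n → ℕ) (y : E)
    (l : List (Fin n)) (h : ∀ i, Commute y (f i)) :
    Commute y ((l.map fun i => f i ^ α i).prod) := by
  induction l with
  | nil => simp
  | cons a l ih => simpa using ((h a).pow_right _).mul_right ih

lemma list_notMem_congr {n : ℕ} {E : Type} [Ring E] (f : Fin n → E) (α β : Fin n → ℕ) (k : Fin n)
    (h : ∀ i, i ≠ k → α i = β i) (l : List (Fin n)) (hk : k ∉ l) :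
    (l.map fun i => f i ^ α i).prod = (l.map fun i => f i ^ β i).prod := by
  congr 1
  refine List.map_congr_left fun i hi => ?_
  rw [h i]
  rintro rfl
  exact hk hi

lemma lpr_add_single {n : ℕ} {E : Type} [Ring E] (f : Fin n → E)
    (hf : ∀ i j, Commute (f i) (f j)) (α : Fin n → ℕ) (k : Fin n) :
    lpr f (α + Pi.single k 1) = f k * lpr f α := by
  have aux : ∀ l : List (Fin n), l.Nodup → k ∈ l →
      (l.map fun i => f i ^ ((α + Pi.single k 1 : Fin n → ℕ) i)).prod =
        f k * (l.map fun i => f i ^ α i).prod := by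
    intro l
    induction l with
    | nil => simp
    | cons a l ih =>
      intro hnd hk
      rw [List.nodup_cons] at hnd
      simp only [List.map_cons, List.prod_cons]
      by_cases h : k = a
      · subst h
        rw [list_notMem_congr f _ α k (fun i hi => by simp [hi]) l hnd.1]
        simp [pow_succ', mul_assoc]
      · have hk' : k ∈ l := by simpa [h] using hk
        rw [ih hnd.2 hk']
        have h' : a ≠ k := fun e => h e.symm
        simp only [Pi.add_apply, Pi.single_apply, h', if_false, add_zero]
        rw [← mul_assoc, ← mul_assoc, ((hf k a).pow_right (α a)).eq]
  exact aux _ (List.nodup_finRange n) (List.mem_finRange k)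

lemma lpr_commute {n : ℕ} {E : Type} [Ring E] (f : Fin n → E) (α : Fin n → ℕ) (y : E)
    (h : ∀ i, Commute y (f i)) : Commute y (lpr f α) := list_commute f α y _ h

lemma lpr_comm {n : ℕ} {K E : Type} [Field K] [Ring E] [Algebra K E] (f : Fin n → E)
    (hf : ∀ i j, Commute (f i) (f j)) (y : E) (c : K) (k : Fin n)
    (hy : ∀ i, y * f i = f i * y + if i = k then c • (1 : E) else 0) (α : Fin n → ℕ) :
    y * lpr f α = lpr f α * y + (c * α k) • lpr f (α - Pi.single k 1) := by
  have hpow : ∀ m : ℕ, y * f k ^ m = f k ^ m * y + (c * m) • f k ^ (m - 1) := by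
    intro m
    induction m with
    | zero => simp
    | succ m ih =>
      rw [pow_succ, ← mul_assoc, ih, add_mul, mul_assoc, hy k, if_pos rfl]
      rcases m with _ | m
      · simp [mul_add]
      · simp only [mul_add, Nat.add_sub_cancel, smul_mul_assoc, ← pow_succ, mul_smul_comm, mul_one,
          ← mul_assoc]
        rw [add_assoc, ← add_smul]
        congr 2
        push_cast
        ring
  have hne : ∀ i, i ≠ k → Commute y (f i) := by
    intro i hi
    have := hy i
    rwa [if_neg hi, add_zero] at this
  have aux : ∀ l : List (Fin n), l.Nodup →
      y * (l.map fun i => f i ^ α i).prod = (l.map fun i => f i ^ α i).prod * y +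
        if k ∈ l then (c * α k) •
        (l.map fun i => f i ^ ((α - Pi.single k 1 : Fin n → ℕ) i)).prod else 0 := by
    intro l
    induction l with
    | nil => simp
    | cons a l ih =>
      intro hnd
      rw [List.nodup_cons] at hnd
      simp only [List.map_cons, List.prod_cons]
      by_cases h : k = a
      · subst h
        rw [list_notMem_congr f (α - Pi.single k 1) α k (fun i hi => by simp [hi]) l hnd.1]
        rw [← mul_assoc, hpow, add_mul, mul_assoc, ih hnd.2]
        simp [hnd.1, mul_assoc]
      · have h' : a ≠ k := fun e => h e.symm
        rw [← mul_assoc, ((hne a h').pow_right _).eq, mul_assoc, ih hnd.2]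
        have : k ∈ a :: l ↔ k ∈ l := by simp [h]
        simp only [this]
        split_ifs
        · simp [mul_add, mul_assoc, h']
        · simp [mul_assoc]
  have := aux _ (List.nodup_finRange n)
  simpa [lpr] using this

/-- A representation of the Weyl relations. -/
structure WRep (n : ℕ) (K M : Type) [Field K] [AddCommGroup M] [Module K M] where
  x : Fin n → Module.End K M
  d : Fin n → Module.End K M
  xx : ∀ i j, Commute (x i) (x j)
  dd : ∀ i j, Commute (d i) (d j)
  dx : ∀ i j, d i * x j = x j * d i + if i = j then 1 else 0

variable {n p : ℕ} {K M : Type} [Field K] [AddCommGroup M] [Module K M]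

namespace WRep
variable (R : WRep n K M)

abbrev Idx (n : ℕ) := Fin n ⊕ Fin n

def mon (e : Idx n → ℕ) : Module.End K M := lpr R.x (e ∘ Sum.inl) * lpr R.d (e ∘ Sum.inr)

lemma comp_inl_inl (e : Idx n → ℕ) (k : Fin n) :
    (e + Pi.single (Sum.inl k) 1) ∘ Sum.inl = e ∘ Sum.inl + Pi.single k 1 := by
  funext i; simp [Pi.single_apply]
lemma comp_inl_inr (e : Idx n → ℕ) (k : Fin n) :
    (e + Pi.single (Sum.inl k) 1) ∘ Sum.inr = e ∘ Sum.inr := by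
  funext i; simp [Pi.single_apply]
lemma comp_inr_inl (e : Idx n → ℕ) (k : Fin n) :
    (e + Pi.single (Sum.inr k) 1) ∘ Sum.inl = e ∘ Sum.inl := by
  funext i; simp [Pi.single_apply]
lemma comp_inr_inr (e : Idx n → ℕ) (k : Fin n) :
    (e + Pi.single (Sum.inr k) 1) ∘ Sum.inr = e ∘ Sum.inr + Pi.single k 1 := by
  funext i; simp [Pi.single_apply]
lemma comp_inl_inl' (e : Idx n → ℕ) (k : Fin n) :
    (e - Pi.single (Sum.inl k) 1) ∘ Sum.inl = e ∘ Sum.inl - Pi.single k 1 := by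
  funext i; simp [Pi.single_apply]
lemma comp_inl_inr' (e : Idx n → ℕ) (k : Fin n) :
    (e - Pi.single (Sum.inl k) 1) ∘ Sum.inr = e ∘ Sum.inr := by
  funext i; simp [Pi.single_apply]
lemma comp_inr_inl' (e : Idx n → ℕ) (k : Fin n) :
    (e - Pi.single (Sum.inr k) 1) ∘ Sum.inl = e ∘ Sum.inl := by
  funext i; simp [Pi.single_apply]
lemma comp_inr_inr' (e : Idx n → ℕ) (k : Fin n) :
    (e - Pi.single (Sum.inr k) 1) ∘ Sum.inr = e ∘ Sum.inr - Pi.single k 1 := by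
  funext i; simp [Pi.single_apply]

lemma mon_zero : R.mon 0 = 1 := by
  have h1 : (0 : Idx n → ℕ) ∘ Sum.inl = 0 := rfl
  have h2 : (0 : Idx n → ℕ) ∘ Sum.inr = 0 := rfl
  rw [mon, h1, h2, lpr_zero, lpr_zero, mul_one]

lemma x_mon (e : Idx n → ℕ) (k : Fin n) :
    R.x k * R.mon e = R.mon (e + Pi.single (Sum.inl k) 1) := by
  rw [mon, mon, comp_inl_inl, comp_inl_inr, lpr_add_single _ R.xx, mul_assoc]

lemma mon_d (e : Idx n → ℕ) (k : Fin n) :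
    R.mon e * R.d k = R.mon (e + Pi.single (Sum.inr k) 1) := by
  rw [mon, mon, comp_inr_inl, comp_inr_inr, lpr_add_single _ R.dd, mul_assoc,
    (lpr_commute R.d (e ∘ Sum.inr) (R.d k) (fun i => R.dd k i)).eq]

lemma d_mon (e : Idx n → ℕ) (k : Fin n) :
    R.d k * R.mon e = R.mon e * R.d k +
      (e (Sum.inl k) : K) • R.mon (e - Pi.single (Sum.inl k) 1) := by
  rw [mon, mon, comp_inl_inl', comp_inl_inr', ← mul_assoc,
    lpr_comm (K := K) R.x R.xx (R.d k) 1 k, add_mul, mul_assoc, mul_assoc,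
    (lpr_commute R.d (e ∘ Sum.inr) (R.d k) (fun i => R.dd k i)).eq]
  · simp
  · intro i
    rw [R.dx]
    simp [eq_comm]

lemma mon_x (e : Idx n → ℕ) (k : Fin n) :
    R.mon e * R.x k = R.x k * R.mon e +
      (e (Sum.inr k) : K) • R.mon (e - Pi.single (Sum.inr k) 1) := by
  have := lpr_comm (K := K) R.d R.dd (R.x k) (-1) k (by
    intro i
    rw [R.dx]
    by_cases h : i = k <;> simp [h]) (e ∘ Sum.inr)
  have h2 : lpr R.d (e ∘ Sum.inr) * R.x k = R.x k * lpr R.d (e ∘ Sum.inr) +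
      (e (Sum.inr k) : K) • lpr R.d (e ∘ Sum.inr - Pi.single k 1) := by
    rw [this]; simp
  rw [mon, mon, comp_inr_inl', comp_inr_inr', mul_assoc, h2, mul_add, ← mul_assoc, ← mul_assoc,
    (lpr_commute R.x (e ∘ Sum.inl) (R.x k) (fun i => R.xx k i)).eq]
  simp

end WRep
end PartB

section PartC

lemma finrank_sup_singleton {K M : Type} [Field K] [AddCommGroup M] [Module K M]
    (W : Submodule K M) [FiniteDimensional K W] (x : M) (hx : x ∉ W) :
    Module.finrank K (W ⊔ Submodule.span K {x} : Submodule K M) = Module.finrank K W + 1 := by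
  have h0 : x ≠ 0 := fun h => hx (h ▸ W.zero_mem)
  have h1 := Submodule.finrank_sup_add_finrank_inf_eq W (Submodule.span K {x})
  have h2 : W ⊓ Submodule.span K {x} = ⊥ := by
    rw [← disjoint_iff]
    exact (Submodule.disjoint_span_singleton' h0).2 hx
  rw [h2, finrank_bot, finrank_span_singleton h0] at h1
  simpa using h1

open Classical in
lemma greedy {Λ Γ K M : Type} [LinearOrder Γ] [Field K] [AddCommGroup M] [Module K M]
    (key : Λ → Γ) (hkey : Function.Injective key) (v : Λ → M) (S : Finset Λ) :
    Module.finrank K (Submodule.span K (v '' (S : Set Λ))) =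
      (S.filter (fun l => v l ∉ Submodule.span K (v '' {u | u ∈ S ∧ key u < key l}))).card := by
  induction S using Finset.induction_on_max_value key with
  | empty =>
    have h : Submodule.span K (v '' ((∅ : Finset Λ) : Set Λ)) = ⊥ := by
      rw [Submodule.span_eq_bot]
      rintro _ ⟨x, hx, _⟩
      exact absurd hx (by simp)
    rw [h, finrank_bot]
    simp
  | @insert a S ha hmax ih =>
    have hlt : ∀ x ∈ S, key x < key a := fun x hx =>
      lt_of_le_of_ne (hmax x hx) fun h => ha (hkey h ▸ hx)
    have hA : {u | u ∈ insert a S ∧ key u < key a} = (S : Set Λ) := by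
      ext u
      simp only [Finset.mem_insert, Set.mem_ofPred_eq, Finset.mem_coe]
      constructor
      · rintro ⟨rfl | h, h'⟩
        · exact absurd h' (lt_irrefl _)
        · exact h
      · intro h; exact ⟨Or.inr h, hlt u h⟩
    have hS : ∀ l ∈ S, {u | u ∈ insert a S ∧ key u < key l} = {u | u ∈ S ∧ key u < key l} := by
      intro l hl
      ext u
      simp only [Finset.mem_insert, Set.mem_ofPred_eq]
      constructor
      · rintro ⟨rfl | h, h'⟩
        · exact absurd h' (not_lt.2 (hlt l hl).le)
        · exact ⟨h, h'⟩
      · rintro ⟨h, h'⟩; exact ⟨Or.inr h, h'⟩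
    have hcong : S.filter (fun l => v l ∉ Submodule.span K
          (v '' {u | u ∈ insert a S ∧ key u < key l})) =
        S.filter (fun l => v l ∉ Submodule.span K (v '' {u | u ∈ S ∧ key u < key l})) :=
      Finset.filter_congr fun l hl => by rw [hS l hl]
    have hspan : Submodule.span K (v '' ((insert a S : Finset Λ) : Set Λ)) =
        Submodule.span K (v '' (S : Set Λ)) ⊔ Submodule.span K {v a} := by
      rw [Finset.coe_insert, Set.image_insert_eq, Submodule.span_insert, sup_comm]
    have : FiniteDimensional K (Submodule.span K (v '' (S : Set Λ))) :=
      FiniteDimensional.span_of_finite K (S.finite_toSet.image v)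
    rw [Finset.filter_insert, hA, hcong, hspan]
    split_ifs with h
    · rw [← ih, sup_eq_left.2]
      rw [Submodule.span_le]; simpa using h
    · rw [Finset.card_insert_of_notMem (by simp [ha]), ← ih, finrank_sup_singleton _ _ h]

variable {n p m : ℕ} {K M : Type} [Field K] [AddCommGroup M] [Module K M]

lemma exists_key (n m : ℕ) : ∃ key : ((WRep.Idx n → ℕ) × Fin m) → Lex (Lex (Fin (n + n) → ℕ) × Fin m),
    Function.Injective key ∧
    (∀ u l c, key u < key l → key (u.1 + c, u.2) < key (l.1 + c, l.2)) ∧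
    (∀ e i c, c ≠ 0 → key (e, i) < key (e + c, i)) := by
  let k0 : (WRep.Idx n → ℕ) → Lex (Fin (n + n) → ℕ) := fun e => toLex (e ∘ finSumFinEquiv.symm)
  have hadd : ∀ a b, k0 (a + b) = k0 a + k0 b := fun a b => rfl
  have hinj : Function.Injective k0 := by
    intro a b h
    have h' : a ∘ finSumFinEquiv.symm = b ∘ finSumFinEquiv.symm := toLex.injective h
    funext s
    have := congrFun h' (finSumFinEquiv s)
    simpa using this
  refine ⟨fun u => toLex (k0 u.1, u.2), ?_, ?_, ?_⟩
  · rintro ⟨a, i⟩ ⟨b, j⟩ h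
    have h' := toLex.injective h
    simp only [Prod.mk.injEq] at h'
    rw [hinj h'.1, h'.2]
  · rintro ⟨a, i⟩ ⟨b, j⟩ c h
    simp only [Prod.Lex.toLex_lt_toLex] at h ⊢
    rcases h with h | ⟨h, h'⟩
    · left
      rw [hadd, hadd]
      exact add_lt_add_left h _
    · right
      exact ⟨by rw [hadd, hadd, h], h'⟩
  · intro e i c hc
    simp only [Prod.Lex.toLex_lt_toLex]
    left
    rw [hadd]
    have h0 : (0 : Lex (Fin (n + n) → ℕ)) < k0 c := by
      refine lt_of_le_of_ne ?_ ?_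
      · exact Pi.toLex_monotone (a := (0 : Fin (n+n) → ℕ)) (b := c ∘ finSumFinEquiv.symm) (fun _ => Nat.zero_le _)
      · intro h
        exact hc (hinj h.symm)
    exact lt_add_of_pos_right _ h0

namespace WRep
variable (R : WRep n K M) (B : Fin n → Fin p) (g : Fin m → M)

def blk (B : Fin n → Fin p) : Idx n → Fin p := Sum.elim B B

def vv (u : (Idx n → ℕ) × Fin m) : M := R.mon u.1 (g u.2)

def fil (r : Fin p → ℕ) : Submodule K M :=
  Submodule.span K (R.vv g '' {u | dg (blk B) u.1 ≤ r})

lemma x_vv (k : Fin n) (e : Idx n → ℕ) (i : Fin m) :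
    R.x k (R.vv g (e, i)) = R.vv g (e + Pi.single (Sum.inl k) 1, i) := by
  simp only [vv]
  rw [← x_mon]; rfl

lemma d_vv (k : Fin n) (e : Idx n → ℕ) (i : Fin m) :
    R.d k (R.vv g (e, i)) = R.vv g (e + Pi.single (Sum.inr k) 1, i) +
      (e (Sum.inl k) : K) • R.vv g (e - Pi.single (Sum.inl k) 1, i) := by
  simp only [vv]
  have := congrArg (fun f : Module.End K M => f (g i)) (R.d_mon e k)
  rw [mon_d] at this
  simpa using this

abbrev Idx2 (n p : ℕ) := Idx n ⊕ Fin p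

def blk2 (B : Fin n → Fin p) : Idx2 n p → Fin p := Sum.elim (blk B) id

lemma dg_blk2 (a : Idx2 n p → ℕ) : dg (blk2 B) a = dg (blk B) (a ∘ Sum.inl) + a ∘ Sum.inr := by
  funext j
  simp only [dg, blk2, Fintype.sum_sum_type, Pi.add_apply, Sum.elim_inl, Sum.elim_inr, id,
    Function.comp_apply]
  congr 1
  rw [Finset.sum_eq_single j]
  · simp
  · intro b _ hb; simp [hb]
  · simp

/-- nonstandard monomials -/
def Ns {Γ : Type} [LinearOrder Γ] (key : ((Idx n → ℕ) × Fin m) → Γ) (i : Fin m)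
    (a : Idx2 n p → ℕ) : Prop :=
  R.vv g (a ∘ Sum.inl, i) ∈ Submodule.span K
    (R.vv g '' {u | dg (blk B) u.1 ≤ dg (blk2 B) a ∧ key u < key (a ∘ Sum.inl, i)})

lemma single_le_of_ne (e : Idx n → ℕ) (s : Idx n) (h : e s ≠ 0) : e - Pi.single s 1 + Pi.single s 1 = e := by
  apply tsub_add_cancel_of_le
  intro t
  by_cases h' : t = s
  · subst h'; simp; omega
  · simp [h']

lemma Ns_step {Γ : Type} [LinearOrder Γ] (key : ((Idx n → ℕ) × Fin m) → Γ)
    (h1 : ∀ u l c, key u < key l → key (u.1 + c, u.2) < key (l.1 + c, l.2))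
    (h2 : ∀ e i c, c ≠ 0 → key (e, i) < key (e + c, i)) (i : Fin m)
    (a : Idx2 n p → ℕ) (s : Idx2 n p) (ha : R.Ns B g key i a) :
    R.Ns B g key i (a + Pi.single s 1) := by
  have hdg : dg (blk2 B) (a + Pi.single s 1) = dg (blk2 B) a + Pi.single (blk2 B s) 1 := by
    rw [dg_add, dg_single]
  have hone : ∀ t : Idx n, (Pi.single t 1 : Idx n → ℕ) ≠ 0 := fun t => by simp
  have hdg' : ∀ (e : Idx n → ℕ) t, dg (blk B) (e + Pi.single t 1) =
    dg (blk B) e + Pi.single (blk B t) 1 := fun e t => by rw [dg_add, dg_single]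
  unfold Ns at ha ⊢
  rw [hdg]
  rcases s with s | j
  · have hc : (a + Pi.single (Sum.inl s) 1 : Idx2 n p → ℕ) ∘ Sum.inl =
        a ∘ Sum.inl + Pi.single s 1 := by
      funext t
      simp [Pi.single_apply]
    rw [hc]
    set e := a ∘ Sum.inl with he
    have hea : dg (blk B) e ≤ dg (blk2 B) a := by
      rw [dg_blk2]; exact le_self_add
    have hbs : blk2 B (Sum.inl s) = blk B s := rfl
    rw [hbs]
    rcases s with k | k
    · rw [← x_vv]
      have : Submodule.span K (R.vv g '' {u | dg (blk B) u.1 ≤ dg (blk2 B) a ∧ key u < key (e, i)}) ≤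
        Submodule.comap (R.x k) (Submodule.span K (R.vv g '' {u | dg (blk B) u.1 ≤
          dg (blk2 B) a + Pi.single (blk B (Sum.inl k)) 1 ∧ key u < key (e + Pi.single (Sum.inl k) 1, i)})) := by
        rw [Submodule.span_le]
        rintro _ ⟨⟨f, i'⟩, ⟨hf1, hf2⟩, rfl⟩
        simp only [Submodule.comap_coe, Set.mem_preimage, SetLike.mem_coe]
        rw [x_vv]
        apply Submodule.subset_span
        refine ⟨_, ⟨?_, h1 _ _ _ hf2⟩, rfl⟩
        simp only [hdg']
        exact add_le_add_left hf1 _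
      exact this ha
    · set T := Submodule.span K (R.vv g '' {u | dg (blk B) u.1 ≤
          dg (blk2 B) a + Pi.single (blk B (Sum.inr k)) 1 ∧ key u < key (e + Pi.single (Sum.inr k) 1, i)}) with hT
      have hlow : ∀ f i', dg (blk B) f ≤ dg (blk2 B) a → key (f, i') ≤ key (e, i) →
          (f (Sum.inl k) : K) • R.vv g (f - Pi.single (Sum.inl k) 1, i') ∈ T := by
        intro f i' hf hk
        by_cases h0 : f (Sum.inl k) = 0
        · simp [h0]
        · apply Submodule.smul_mem
          apply Submodule.subset_span
          refine ⟨_, ⟨?_, ?_⟩, rfl⟩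
          · exact (dg_mono _ tsub_le_self).trans (hf.trans le_self_add)
          · have h3 := h2 (f - Pi.single (Sum.inl k) 1) i' _ (hone (Sum.inl k))
            rw [single_le_of_ne f _ h0] at h3
            exact h3.trans_le (hk.trans (h2 e i _ (hone (Sum.inr k))).le)
      have : Submodule.span K (R.vv g '' {u | dg (blk B) u.1 ≤ dg (blk2 B) a ∧ key u < key (e, i)}) ≤
        Submodule.comap (R.d k) T := by
        rw [Submodule.span_le]
        rintro _ ⟨⟨f, i'⟩, ⟨hf1, hf2⟩, rfl⟩
        simp only [Submodule.comap_coe, Set.mem_preimage, SetLike.mem_coe]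
        rw [d_vv]
        refine T.add_mem ?_ (hlow f i' hf1 hf2.le)
        apply Submodule.subset_span
        refine ⟨_, ⟨?_, h1 _ _ _ hf2⟩, rfl⟩
        simp only [hdg']
        exact add_le_add_left hf1 _
      have h4 : R.d k (R.vv g (e, i)) ∈ T := this ha
      rw [d_vv] at h4
      exact (T.add_mem_iff_left (hlow e i hea le_rfl)).1 h4
  · have hc : (a + Pi.single (Sum.inr j) 1 : Idx2 n p → ℕ) ∘ Sum.inl = a ∘ Sum.inl := by
      funext t
      simp
    rw [hc]
    refine Submodule.span_mono (Set.image_mono ?_) ha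
    rintro u ⟨hu1, hu2⟩
    exact ⟨hu1.trans le_self_add, hu2⟩

open Classical in
lemma finrank_fil {Γ : Type} [LinearOrder Γ] (key : ((Idx n → ℕ) × Fin m) → Γ)
    (hkey : Function.Injective key) (r : Fin p → ℕ) :
    Module.finrank K (R.fil B g r) =
      ∑ i, ((Fset (blk2 B) r).filter (fun a => ¬ R.Ns B g key i a)).card := by
  let F : (Fin m × (Idx2 n p → ℕ)) → (Idx n → ℕ) × Fin m := fun q => (q.2 ∘ Sum.inl, q.1)
  let S : Finset ((Idx n → ℕ) × Fin m) :=
    ((Finset.univ : Finset (Fin m)) ×ˢ Fset (blk2 B) r).image F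
  have hmem : ∀ u, u ∈ S ↔ dg (blk B) u.1 ≤ r := by
    rintro ⟨e, i⟩
    simp only [S, Finset.mem_image, Finset.mem_product, Finset.mem_univ, true_and, mem_Fset, F,
      Prod.exists, Prod.mk.injEq]
    constructor
    · rintro ⟨i', a, ha, rfl, rfl⟩
      rw [← ha, dg_blk2]; exact le_self_add
    · intro h
      refine ⟨i, Sum.elim e (r - dg (blk B) e), ?_, ?_, rfl⟩
      · rw [dg_blk2]; simp [add_tsub_cancel_of_le h]
      · simp
  have hS : ((S : Finset _) : Set ((Idx n → ℕ) × Fin m)) = {u | dg (blk B) u.1 ≤ r} := by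
    ext u; exact hmem u
  rw [fil, ← hS, greedy key hkey]
  have hinj : Set.InjOn F ((Finset.univ : Finset (Fin m)) ×ˢ Fset (blk2 B) r : Finset _) := by
    rintro ⟨i, a⟩ ha ⟨i', a'⟩ ha' h
    simp only [Finset.coe_product, Set.mem_prod, Finset.mem_coe, mem_Fset] at ha ha'
    simp only [F, Prod.mk.injEq] at h
    have h3 := ha.2.trans ha'.2.symm
    rw [dg_blk2, dg_blk2, h.1] at h3
    have h4 := add_left_cancel h3
    rw [Prod.mk.injEq]
    refine ⟨h.2, ?_⟩
    funext s
    rcases s with s | s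
    · exact congrFun h.1 s
    · exact congrFun h4 s
  rw [Finset.filter_image, Finset.card_image_of_injOn (hinj.mono (Finset.coe_subset.2 (Finset.filter_subset _ _)))]
  rw [Finset.card_filter, Finset.sum_product]
  refine Finset.sum_congr rfl fun i _ => ?_
  rw [Finset.card_filter]
  refine Finset.sum_congr rfl fun a ha => ?_
  rw [mem_Fset] at ha
  congr 1
  simp only [Ns, hmem, ha, F]

theorem exists_poly (nn : Fin p → ℕ) (hB : ∀ j, (Finset.univ.filter fun i => B i = j).card = nn j) :
    ∃ φ : MvPolynomial (Fin p) ℚ, (∀ j, φ.degreeOf j ≤ 2 * nn j) ∧ ∃ s : Fin p → ℕ, ∀ r, s ≤ r →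
      eval (fun i => (r i : ℚ)) φ = (Module.finrank K (R.fil B g r) : ℚ) := by
  classical
  obtain ⟨key, hk0, hk1, hk2⟩ := exists_key n m
  have hN : ∀ j, Nat.card {s : Idx2 n p // blk2 B s = j} = 2 * nn j + 1 := by
    intro j
    rw [Nat.card_eq_fintype_card, Fintype.card_subtype, Finset.card_filter, Fintype.sum_sum_type,
      Fintype.sum_sum_type]
    have h1 : (∑ x : Fin n, if B x = j then 1 else 0) = nn j := by
      rw [← hB, Finset.card_filter]
    have h2 : (∑ x : Fin p, if x = j then 1 else 0) = 1 := by simp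
    rw [two_mul]
    exact congrArg₂ (· + ·) (congrArg₂ (· + ·) h1 h1) h2
  have := fun i : Fin m => hilb_count (blk2 B) (fun j => 2 * nn j) hN (R.Ns B g key i)
    (fun a b hab ha => upper_of_step _ (R.Ns_step B g key hk1 hk2 i) hab ha)
  choose φ hφ s hs using this
  refine ⟨∑ i, φ i, ?_, fun j => ∑ i, s i j, ?_⟩
  · intro j
    exact (degreeOf_sum_le _ _ _).trans (Finset.sup_le fun i _ => hφ i j)
  · intro r hr
    rw [map_sum, R.finrank_fil B g key hk0, Nat.cast_sum]
    refine Finset.sum_congr rfl fun i _ => ?_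
    apply hs
    intro j
    exact (Finset.single_le_sum (f := fun i => s i j) (fun _ _ => Nat.zero_le _) (Finset.mem_univ i)).trans (hr j)

end WRep
end PartC

section PartD
variable {n p m : ℕ} {K M : Type} [Field K] [AddCommGroup M] [Module K M]

namespace WRep
variable (R : WRep n K M) (B : Fin n → Fin p) (g : Fin m → M)

lemma fil_mono {r r' : Fin p → ℕ} (h : r ≤ r') : R.fil B g r ≤ R.fil B g r' :=
  Submodule.span_mono (Set.image_mono fun _ hu => le_trans hu h)

lemma vv_mem_fil {r : Fin p → ℕ} (e : Idx n → ℕ) (i : Fin m) (h : dg (blk B) e ≤ r) :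
    R.vv g (e, i) ∈ R.fil B g r := Submodule.subset_span ⟨_, h, rfl⟩

instance fil_fin (r : Fin p → ℕ) : FiniteDimensional K (R.fil B g r) := by
  apply FiniteDimensional.span_of_finite
  apply Set.Finite.image
  refine ((Set.finite_Iic (fun t => r (blk B t))).prod (Set.finite_univ (α := Fin m))).subset ?_
  rintro ⟨e, i⟩ h
  refine ⟨fun t => (le_dg (blk B) e t).trans (h _), trivial⟩

lemma x_fil (k : Fin n) (r : Fin p → ℕ) (u : M) (hu : u ∈ R.fil B g r) :
    R.x k u ∈ R.fil B g (r + Pi.single (B k) 1) := by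
  have : R.fil B g r ≤ Submodule.comap (R.x k) (R.fil B g (r + Pi.single (B k) 1)) := by
    rw [fil, Submodule.span_le]
    rintro _ ⟨⟨e, i⟩, h, rfl⟩
    simp only [Submodule.comap_coe, Set.mem_preimage, SetLike.mem_coe]
    rw [x_vv]
    apply vv_mem_fil
    rw [dg_add, dg_single]
    exact add_le_add_left h _
  exact this hu

lemma d_fil (k : Fin n) (r : Fin p → ℕ) (u : M) (hu : u ∈ R.fil B g r) :
    R.d k u ∈ R.fil B g (r + Pi.single (B k) 1) := by
  have : R.fil B g r ≤ Submodule.comap (R.d k) (R.fil B g (r + Pi.single (B k) 1)) := by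
    rw [fil, Submodule.span_le]
    rintro _ ⟨⟨e, i⟩, h, rfl⟩
    simp only [Submodule.comap_coe, Set.mem_preimage, SetLike.mem_coe]
    rw [d_vv]
    apply Submodule.add_mem
    · apply vv_mem_fil
      rw [dg_add, dg_single]
      exact add_le_add_left h _
    · apply Submodule.smul_mem
      apply vv_mem_fil
      exact (dg_mono _ tsub_le_self).trans (le_trans h le_self_add)
  exact this hu

lemma mon_fil (e : Idx n → ℕ) : ∀ (r : Fin p → ℕ) (u : M) (_ : u ∈ R.fil B g r),
    R.mon e u ∈ R.fil B g (r + dg (blk B) e) := by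
  refine upper_of_step (fun e => ∀ (r : Fin p → ℕ) (u : M) (_ : u ∈ R.fil B g r),
    R.mon e u ∈ R.fil B g (r + dg (blk B) e)) ?_ (a := 0) (fun _ => Nat.zero_le _) ?_
  · intro e s he r u hu
    rw [dg_add, dg_single]
    rcases s with k | k
    · rw [← x_mon, ← add_assoc]
      exact R.x_fil B g k _ _ (he r u hu)
    · rw [← mon_d, add_comm (dg _ _), ← add_assoc]
      exact he _ _ (R.d_fil B g k r u hu)
  · intro r u hu
    rw [mon_zero]
    exact R.fil_mono B g le_self_add hu

noncomputable def rho : MvPolynomial (Idx n) K →ₗ[K] Module.End K M :=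
  (MvPolynomial.basisMonomials (Idx n) K).constr K (fun e => R.mon e)

lemma rho_monomial (e : Idx n →₀ ℕ) (c : K) : R.rho (monomial e c) = c • R.mon e := by
  have h : R.rho (monomial e 1) = R.mon e := by
    have := (MvPolynomial.basisMonomials (Idx n) K).constr_basis K (fun e => R.mon e) e
    simpa [rho] using this
  have h2 : (monomial e c : MvPolynomial (Idx n) K) = c • monomial e 1 := by
    simp [smul_monomial]
  rw [h2, map_smul, h]

lemma coe_sub_single (e : Idx n →₀ ℕ) (s : Idx n) :
    ((e - Finsupp.single s 1 : Idx n →₀ ℕ) : Idx n → ℕ) = (e : Idx n → ℕ) - Pi.single s 1 := by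
  funext t
  simp [Finsupp.single_apply, Pi.single_apply, eq_comm]

lemma rho_pderiv_inl (v : MvPolynomial (Idx n) K) (k : Fin n) :
    R.rho (pderiv (Sum.inl k) v) = R.d k * R.rho v - R.rho v * R.d k := by
  induction v using MvPolynomial.induction_on' with
  | monomial e c =>
    rw [pderiv_monomial, rho_monomial, rho_monomial, mul_smul_comm, smul_mul_assoc, ← smul_sub,
      d_mon, coe_sub_single, add_sub_cancel_left, smul_smul]
  | add a b ha hb => simp only [map_add, ha, hb]; noncomm_ring

lemma rho_pderiv_inr (v : MvPolynomial (Idx n) K) (k : Fin n) :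
    R.rho (pderiv (Sum.inr k) v) = R.rho v * R.x k - R.x k * R.rho v := by
  induction v using MvPolynomial.induction_on' with
  | monomial e c =>
    rw [pderiv_monomial, rho_monomial, rho_monomial, mul_smul_comm, smul_mul_assoc, ← smul_sub,
      mon_x, coe_sub_single, add_sub_cancel_left, smul_smul]
  | add a b ha hb => simp only [map_add, ha, hb]; noncomm_ring

lemma coeff_pd (v : MvPolynomial (Idx n) K) (t : Idx n) (e : Idx n →₀ ℕ) :
    coeff e (pderiv t v) = coeff (e + Finsupp.single t 1) v * ((e t : K) + 1) := by
  classical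
  induction v using MvPolynomial.induction_on' with
  | monomial f c =>
    rw [pderiv_monomial, coeff_monomial, coeff_monomial]
    by_cases h0 : f t = 0
    · have : f ≠ e + Finsupp.single t 1 := by
        rintro rfl; simp at h0
      simp [h0, this]
    · have hf : f - Finsupp.single t 1 + Finsupp.single t 1 = f := by
        apply tsub_add_cancel_of_le
        rw [Finsupp.single_le_iff]; omega
      by_cases h : f - Finsupp.single t 1 = e
      · have h' : f = e + Finsupp.single t 1 := by rw [← h, hf]
        rw [if_pos h, if_pos h', h']
        simp
      · have h' : f ≠ e + Finsupp.single t 1 := by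
          rintro rfl; simp at h
        rw [if_neg h, if_neg h', zero_mul]
  | add a b ha hb => simp only [map_add, coeff_add, ha, hb]; ring

theorem kill [CharZero K] (s : Fin p → ℕ) : ∀ (N : ℕ) (a : Fin p → ℕ) (_ : ∑ j, a j = N)
    (v : MvPolynomial (Idx n) K), v ≠ 0 → (∀ e ∈ v.support, dg (blk B) e ≤ a) →
    (∀ u ∈ R.fil B g (a + s), R.rho v u = 0) → R.fil B g s = ⊥ := by
  intro N
  induction N using Nat.strong_induction_on with
  | _ N ih =>
  intro a haN v hv hsup hkill
  by_cases hc : ∃ e ∈ v.support, ∃ t, e t ≠ 0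
  · obtain ⟨e, he, t, ht⟩ := hc
    have hat : 1 ≤ a (blk B t) := by
      have := (le_dg (blk B) e t).trans (hsup e he _)
      omega
    have haa : a - Pi.single (blk B t) 1 + Pi.single (blk B t) 1 = a := by
      apply tsub_add_cancel_of_le
      intro j
      by_cases h : j = blk B t
      · subst h; simpa using hat
      · simp [h]
    set a' := a - Pi.single (blk B t) 1 with ha'
    have hsum : ∑ j, a' j + 1 = N := by
      rw [← haN, ← haa]
      simp [Finset.sum_add_distrib]
    refine ih (∑ j, a' j) (by omega) a' rfl (pderiv t v) ?_ ?_ ?_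
    · intro h0
      have h1 := coeff_pd v t (e - Finsupp.single t 1)
      have he' : e - Finsupp.single t 1 + Finsupp.single t 1 = e := by
        apply tsub_add_cancel_of_le
        rw [Finsupp.single_le_iff]; omega
      rw [h0, he', coeff_zero] at h1
      rcases mul_eq_zero.1 h1.symm with h | h
      · exact (mem_support_iff.1 he) h
      · exact Nat.cast_add_one_ne_zero _ h
    · intro f hf
      rw [mem_support_iff, coeff_pd] at hf
      have h1 := hsup _ (mem_support_iff.2 (left_ne_zero_of_mul hf))
      have h2 : ((f + Finsupp.single t 1 : Idx n →₀ ℕ) : Idx n → ℕ) = (f : Idx n → ℕ) + Pi.single t 1 := by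
        funext x
        simp [Finsupp.single_apply, Pi.single_apply, eq_comm]
      rw [h2, dg_add, dg_single, ← haa] at h1
      exact le_of_add_le_add_right h1
    · intro u hu
      have hle : a' + s + Pi.single (blk B t) 1 = a + s := by
        rw [add_right_comm, haa]
      have hle' : a' + s ≤ a + s := by rw [← hle]; exact le_self_add
      have hu' := R.fil_mono B g hle' hu
      rcases t with k | k
      · rw [rho_pderiv_inl]
        have h1 : R.d k u ∈ R.fil B g (a + s) := by
          rw [← hle]; exact R.d_fil B g k _ u hu
        simp [hkill u hu', hkill _ h1]
      · rw [rho_pderiv_inr]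
        have h1 : R.x k u ∈ R.fil B g (a + s) := by
          rw [← hle]; exact R.x_fil B g k _ u hu
        simp [hkill u hu', hkill _ h1]
  · push Not at hc
    have h0 : ∀ e ∈ v.support, e = 0 := fun e he => Finsupp.ext (hc e he)
    have hvc : v = monomial 0 (coeff 0 v) := by
      ext e
      rw [coeff_monomial]
      by_cases h : e ∈ v.support
      · rw [h0 e h, if_pos rfl]
      · split_ifs with h'
        · rw [h']
        · simpa using h
    have hc0 : coeff 0 v ≠ 0 := by
      intro h
      rw [h] at hvc
      exact hv (by simpa using hvc)
    rw [eq_bot_iff]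
    intro u hu
    have := hkill u (R.fil_mono B g le_add_self hu)
    rw [hvc, rho_monomial] at this
    have hz : R.mon ((0 : Idx n →₀ ℕ) : Idx n → ℕ) = 1 := R.mon_zero
    rw [hz] at this
    simpa [hc0] using this

theorem card_le [CharZero K] (s a : Fin p → ℕ) (hs : R.fil B g s ≠ ⊥)
    (T : Finset (Idx n → ℕ)) (hT : ∀ e ∈ T, dg (blk B) e ≤ a) :
    T.card ≤ Module.finrank K (R.fil B g (a + s)) * Module.finrank K (R.fil B g (a + s + a)) := by
  classical
  have hmap : ∀ e : T, ∀ u ∈ R.fil B g (a + s), R.mon e u ∈ R.fil B g (a + s + a) := by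
    intro e u hu
    exact R.fil_mono B g (add_le_add_right (hT e e.2) _) (R.mon_fil B g e _ u hu)
  let f : T → (R.fil B g (a + s) →ₗ[K] R.fil B g (a + s + a)) := fun e =>
    (R.mon e).restrict (hmap e)
  have hli : LinearIndependent K f := by
    rw [Fintype.linearIndependent_iff]
    intro c hc
    by_contra! hne
    obtain ⟨e0, he0⟩ := hne
    let v : MvPolynomial (Idx n) K :=
      ∑ e : T, monomial (Finsupp.equivFunOnFinite.symm (e : Idx n → ℕ)) (c e)
    have hcoeff : ∀ e : T, coeff (Finsupp.equivFunOnFinite.symm (e : Idx n → ℕ)) v = c e := by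
      intro e
      simp only [v, coeff_sum, coeff_monomial]
      rw [Finset.sum_eq_single e]
      · simp
      · intro b _ hb
        rw [if_neg]
        intro h
        exact hb (Subtype.ext (Finsupp.equivFunOnFinite.symm.injective h))
      · simp
    refine hs (R.kill B g s _ a rfl v ?_ ?_ ?_)
    · intro h
      apply he0
      rw [← hcoeff e0, h, coeff_zero]
    · intro e he
      rw [mem_support_iff] at he
      simp only [v, coeff_sum, coeff_monomial] at he
      obtain ⟨b, _, hb⟩ := Finset.exists_ne_zero_of_sum_ne_zero he
      have hb' : Finsupp.equivFunOnFinite.symm (b : Idx n → ℕ) = e := by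
        by_contra h
        exact hb (if_neg h)
      rw [← hb']
      exact hT b b.2
    · intro u hu
      have h1 := congrArg (fun F => ((F ⟨u, hu⟩ : R.fil B g (a + s + a)) : M)) hc
      simp only [v, map_sum, rho_monomial]
      simpa [f, LinearMap.sum_apply] using h1
  have := hli.fintype_card_le_finrank
  rw [Module.finrank_linearMap] at this
  simpa using this

end WRep

lemma growth (Q : Polynomial ℚ) (N D : ℕ) (hD : Q.natDegree ≤ D)
    (h : ∀ c : ℕ, (c : ℚ) ^ N ≤ Q.eval (c : ℚ)) : N ≤ D := by
  by_contra! hlt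
  have hdeg : Q.degree < (Polynomial.X ^ N : Polynomial ℚ).degree := by
    rw [Polynomial.degree_X_pow]
    exact lt_of_le_of_lt Polynomial.degree_le_natDegree (by exact_mod_cast lt_of_le_of_lt hD hlt)
  have ht := (Polynomial.div_tendsto_atTop_zero_of_degree_lt Q _ hdeg).comp
    (tendsto_natCast_atTop_atTop (R := ℚ))
  have hev := (ht.eventually (gt_mem_nhds (show (0 : ℚ) < 1 by norm_num))).and
    (Filter.eventually_gt_atTop 0)
  obtain ⟨c, hc, hc0⟩ := hev.exists
  simp only [Function.comp_apply, Polynomial.eval_pow, Polynomial.eval_X] at hc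
  have hpos : (0 : ℚ) < (c : ℚ) ^ N := by positivity
  rw [div_lt_one hpos] at hc
  exact absurd (h c) (not_le.2 hc)

lemma natDegree_aeval_line (φ : MvPolynomial (Fin p) ℚ) (J : Finset (Fin p)) (s : Fin p → ℕ) (D : ℕ)
    (h : ∀ e ∈ φ.support, ∑ j ∈ J, e j ≤ D) :
    (MvPolynomial.aeval (fun j => Polynomial.C (s j : ℚ) + if j ∈ J then Polynomial.X else 0)
      φ : Polynomial ℚ).natDegree ≤ D := by
  rw [MvPolynomial.aeval_def, MvPolynomial.eval₂_eq']
  refine Polynomial.natDegree_sum_le_of_forall_le _ _ fun e he => ?_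
  refine le_trans ?_ (h e he)
  rw [← Polynomial.C_eq_algebraMap]
  refine (Polynomial.natDegree_C_mul_le _ _).trans ?_
  refine (Polynomial.natDegree_prod_le _ _).trans ?_
  rw [← Finset.sum_filter_add_sum_filter_not Finset.univ (· ∈ J)]
  have h2 : ∑ j ∈ Finset.univ.filter (fun j => ¬ j ∈ J), ((Polynomial.C (s j : ℚ) +
      if j ∈ J then Polynomial.X else 0) ^ e j).natDegree = 0 := by
    refine Finset.sum_eq_zero fun j hj => ?_
    have hj' : j ∉ J := by simpa using hj
    rw [if_neg hj', add_zero, ← Polynomial.C_pow, Polynomial.natDegree_C]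
  rw [h2, add_zero, Finset.filter_univ_mem]
  refine Finset.sum_le_sum fun j hj => ?_
  rw [if_pos hj]
  refine Polynomial.natDegree_pow_le.trans ?_
  rw [add_comm, Polynomial.natDegree_X_add_C, mul_one]

theorem WRep.lower [CharZero K] (R : WRep n K M) (B : Fin n → Fin p) (g : Fin m → M)
    (nn : Fin p → ℕ) (hB : ∀ j, (Finset.univ.filter fun i => B i = j).card = nn j)
    (s : Fin p → ℕ) (hs : R.fil B g s ≠ ⊥) (φ : MvPolynomial (Fin p) ℚ)
    (hφ : ∀ r, s ≤ r → eval (fun i => (r i : ℚ)) φ = (Module.finrank K (R.fil B g r) : ℚ))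
    (J : Finset (Fin p)) (D : ℕ) (h : ∀ e ∈ φ.support, ∑ j ∈ J, e j ≤ D) :
    ∑ j ∈ J, nn j ≤ D := by
  classical
  set q : Polynomial ℚ := MvPolynomial.aeval
    (fun j => Polynomial.C (s j : ℚ) + if j ∈ J then Polynomial.X else 0) φ with hq
  have hqd : q.natDegree ≤ D := natDegree_aeval_line φ J s D h
  have hqe : ∀ x : ℕ, q.eval (x : ℚ) =
      (Module.finrank K (R.fil B g (s + fun j => if j ∈ J then x else 0)) : ℚ) := by
    intro x
    rw [← hφ _ le_self_add, hq, ← Polynomial.coe_evalRingHom, MvPolynomial.aeval_def,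
      MvPolynomial.hom_eval₂]
    rw [MvPolynomial.eval, MvPolynomial.coe_eval₂Hom]
    congr 1
    · ext; simp
    · funext j
      by_cases hj : j ∈ J <;> simp [hj]
  have hmain : ∀ c : ℕ, ((c : ℚ)) ^ (2 * ∑ j ∈ J, nn j) ≤
      q.eval (((2 * n * c : ℕ) : ℚ)) * q.eval (((2 * n * c + 2 * n * c : ℕ) : ℚ)) := by
    intro c
    let T : Finset (WRep.Idx n → ℕ) :=
      Fintype.piFinset (fun t => if WRep.blk B t ∈ J then Finset.range (c + 1) else {0})
    let a : Fin p → ℕ := fun j => if j ∈ J then 2 * n * c else 0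
    have hT : ∀ e ∈ T, dg (WRep.blk B) e ≤ a := by
      intro e he j
      rw [Fintype.mem_piFinset] at he
      simp only [a, dg]
      split_ifs with hj
      · have : ∀ t : WRep.Idx n, (if WRep.blk B t = j then e t else 0) ≤ c := by
          intro t
          split_ifs with ht
          · have := he t
            rw [ht, if_pos hj, Finset.mem_range] at this
            omega
          · exact Nat.zero_le _
        refine (Finset.sum_le_sum fun t _ => this t).trans ?_
        simp
        rw [← two_mul]
      · refine (Finset.sum_eq_zero fun t _ => ?_).le
        split_ifs with ht
        · have := he t
          rw [ht, if_neg hj, Finset.mem_singleton] at this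
          exact this
        · rfl
    have hcard : T.card = (c + 1) ^ (2 * ∑ j ∈ J, nn j) := by
      have h1 : (∏ i : Fin n, if B i ∈ J then c + 1 else 1) = (c + 1) ^ (∑ j ∈ J, nn j) := by
        rw [← Finset.prod_filter, Finset.prod_const]
        congr 1
        rw [Finset.card_eq_sum_card_fiberwise (f := B) (t := J) (by intro x; simp)]
        refine Finset.sum_congr rfl fun j hj => ?_
        rw [← hB j, Finset.filter_filter]
        congr 1
        ext i
        simp only [Finset.mem_filter, Finset.mem_univ, true_and]
        constructor
        · exact fun h => h.2
        · intro h; exact ⟨h ▸ hj, h⟩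
      simp only [T, Fintype.card_piFinset, apply_ite Finset.card, Finset.card_range,
        Finset.card_singleton, Fintype.prod_sum_type]
      rw [two_mul, pow_add]
      exact congrArg₂ (· * ·) h1 h1
    have hle := R.card_le B g s a hs T hT
    have e1 : a + s = s + fun j => if j ∈ J then 2 * n * c else 0 := add_comm _ _
    have e2 : a + s + a = s + fun j => if j ∈ J then (2 * n * c + 2 * n * c) else 0 := by
      funext j
      by_cases hj : j ∈ J <;> simp [a, hj] <;> ring
    rw [hqe, hqe, ← e1, ← e2]
    rw [hcard] at hle
    have hle' : c ^ (2 * ∑ j ∈ J, nn j) ≤ _ := (Nat.pow_le_pow_left (Nat.le_succ c) _).trans hle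
    exact_mod_cast hle'
  have := growth (q.comp (Polynomial.C (2 * n : ℚ) * Polynomial.X) *
      q.comp (Polynomial.C (4 * n : ℚ) * Polynomial.X)) (2 * ∑ j ∈ J, nn j) (2 * D) ?_ ?_
  · omega
  · refine Polynomial.natDegree_mul_le.trans ?_
    have hc : ∀ b : ℚ, (q.comp (Polynomial.C b * Polynomial.X)).natDegree ≤ D := by
      intro b
      refine Polynomial.natDegree_comp_le.trans ?_
      refine (Nat.mul_le_mul hqd ((Polynomial.natDegree_C_mul_le _ _).trans Polynomial.natDegree_X_le)).trans ?_
      simp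
    have h1 := hc (2 * n)
    have h2 := hc (4 * n)
    omega
  · intro c
    have := hmain c
    simp only [Polynomial.eval_mul, Polynomial.eval_comp, Polynomial.eval_C, Polynomial.eval_X]
    have e1 : (2 * n : ℚ) * c = ((2 * n * c : ℕ) : ℚ) := by push_cast; ring
    have e2 : (4 * n : ℚ) * c = ((2 * n * c + 2 * n * c : ℕ) : ℚ) := by push_cast; ring
    rw [e1, e2]
    exact this

end PartD

section PartE

lemma wx_comm (n : ℕ) (K : Type) [Field K] (i j : Fin n) : Commute (wx n K i) (wx n K j) := by
  apply Subtype.ext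
  apply LinearMap.ext
  intro f
  change X i * (X j * f) = X j * (X i * f)
  ring

lemma wd_comm (n : ℕ) (K : Type) [Field K] (i j : Fin n) : Commute (wd n K i) (wd n K j) := by
  apply Subtype.ext
  apply LinearMap.ext
  intro f
  change pderiv i (pderiv j f) = pderiv j (pderiv i f)
  have h : ⁅(pderiv i : Derivation K (MvPolynomial (Fin n) K) (MvPolynomial (Fin n) K)),
      (pderiv j : Derivation K (MvPolynomial (Fin n) K) (MvPolynomial (Fin n) K))⁆ = 0 := by
    apply MvPolynomial.derivation_ext
    intro k
    rw [Derivation.commutator_apply]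
    classical
    simp only [pderiv_X, Pi.single_apply]
    split_ifs <;> simp
  have := congrArg (fun D : Derivation K (MvPolynomial (Fin n) K) (MvPolynomial (Fin n) K) => D f) h
  simp only [Derivation.commutator_apply] at this
  exact sub_eq_zero.mp this

lemma wd_wx (n : ℕ) (K : Type) [Field K] (i j : Fin n) :
    wd n K i * wx n K j = wx n K j * wd n K i + if i = j then 1 else 0 := by
  by_cases h : i = j
  · subst h
    rw [if_pos rfl]
    have key : ((pderiv i).toLinearMap : Module.End K (MvPolynomial (Fin n) K)) *
        LinearMap.mulLeft K (X i) = LinearMap.mulLeft K (X i) * (pderiv i).toLinearMap + 1 := by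
      apply LinearMap.ext
      intro f
      simp only [Module.End.mul_apply, LinearMap.add_apply, LinearMap.mulLeft_apply,
        Derivation.coeFn_coe, Module.End.one_apply]
      rw [pderiv_mul, pderiv_X_self]; ring
    apply Subtype.ext
    rw [Subalgebra.coe_mul, Subalgebra.coe_add, Subalgebra.coe_mul, Subalgebra.coe_one]
    exact key
  · rw [if_neg h, add_zero]
    have key : ((pderiv i).toLinearMap : Module.End K (MvPolynomial (Fin n) K)) *
        LinearMap.mulLeft K (X j) = LinearMap.mulLeft K (X j) * (pderiv i).toLinearMap := by
      apply LinearMap.ext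
      intro f
      simp only [Module.End.mul_apply, LinearMap.mulLeft_apply, Derivation.coeFn_coe]
      rw [pderiv_mul, pderiv_X_of_ne (Ne.symm h)]; ring
    apply Subtype.ext
    rw [Subalgebra.coe_mul, Subalgebra.coe_mul]
    exact key

variable {n p : ℕ} {K : Type} [Field K] {M : Type} [AddCommGroup M] [Module K M]
    [Module (WeylAlg n K) M] [IsScalarTower K (WeylAlg n K) M]

/-- the action of the Weyl algebra -/
noncomputable def wact (n : ℕ) (K : Type) [Field K] (M : Type) [AddCommGroup M] [Module K M]
    [Module (WeylAlg n K) M] [IsScalarTower K (WeylAlg n K) M] :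
    WeylAlg n K →ₐ[K] Module.End K M :=
  haveI : SMulCommClass (WeylAlg n K) K M := IsScalarTower.to_smulCommClass'
  Algebra.lsmul K K M

lemma wact_apply (D : WeylAlg n K) (y : M) : wact n K M D y = D • y := rfl

/-- the representation attached to a module -/
noncomputable def wrep (n : ℕ) (K : Type) [Field K] (M : Type) [AddCommGroup M] [Module K M]
    [Module (WeylAlg n K) M] [IsScalarTower K (WeylAlg n K) M] : WRep n K M where
  x i := wact n K M (wx n K i)
  d i := wact n K M (wd n K i)
  xx i j := (wx_comm n K i j).map _
  dd i j := (wd_comm n K i j).map _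
  dx i j := by
    rw [← map_mul, wd_wx, map_add, map_mul]
    split_ifs <;> simp

lemma wact_mono (α β : Fin n → ℕ) :
    wact n K M (wMono n K α β) = (wrep n K M).mon (Sum.elim α β) := by
  simp only [wMono, WRep.mon, lpr, map_mul, map_list_prod, List.map_map]
  congr 3 <;> (funext i; simp [wrep])

lemma ordBlk_eq (B : Fin n → Fin p) (α β : Fin n → ℕ) (j : Fin p) :
    ordBlk B α β j = dg (WRep.blk B) (Sum.elim α β) j := by
  simp [ordBlk, dg, WRep.blk, Finset.sum_filter, Fintype.sum_sum_type, Finset.sum_add_distrib]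
  rfl

lemma modFilB_eq (B : Fin n → Fin p) {m : ℕ} (g : Fin m → M) (r : Fin p → ℕ) :
    modFilB n p K B M m g (fun j => (r j : ℤ)) = (wrep n K M).fil B g r := by
  apply le_antisymm
  · apply Submodule.span_le.mpr
    rintro _ ⟨i, D, hD, rfl⟩
    change D • g i ∈ (wrep n K M).fil B g r
    rw [← wact_apply]
    induction hD using Submodule.span_induction with
    | mem D h =>
      obtain ⟨α, β, h, rfl⟩ := h
      rw [wact_mono]
      apply Submodule.subset_span
      refine ⟨(Sum.elim α β, i), ?_, rfl⟩
      intro j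
      have := h j
      rw [ordBlk_eq] at this
      exact Int.ofNat_le.mp this
    | zero => simp
    | add a b _ _ ha hb => rw [map_add]; exact Submodule.add_mem _ ha hb
    | smul c a _ ha => rw [map_smul]; exact Submodule.smul_mem _ c ha
  · apply Submodule.span_le.mpr
    rintro _ ⟨⟨e, i⟩, he, rfl⟩
    apply Submodule.subset_span
    refine ⟨i, wMono n K (e ∘ Sum.inl) (e ∘ Sum.inr), ?_, ?_⟩
    · apply Submodule.subset_span
      refine ⟨_, _, ?_, rfl⟩
      intro j
      rw [ordBlk_eq, Sum.elim_comp_inl_inr]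
      exact Int.ofNat_le.mpr (he j)
    · rw [← wact_apply, wact_mono, Sum.elim_comp_inl_inr]; rfl

lemma wrep_fil_ne_bot [Nontrivial M] (B : Fin n → Fin p) {m : ℕ} (g : Fin m → M)
    (hgen : Submodule.span (WeylAlg n K) (Set.range g) = ⊤) (s : Fin p → ℕ) :
    (wrep n K M).fil B g s ≠ ⊥ := by
  intro h
  have hz : ∀ i, g i = 0 := by
    intro i
    have hm : (wrep n K M).vv g (0, i) ∈ (wrep n K M).fil B g s := by
      apply Submodule.subset_span
      refine ⟨_, ?_, rfl⟩
      intro j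
      simp [dg]
    rw [h, Submodule.mem_bot] at hm
    simpa [WRep.vv, WRep.mon_zero] using hm
  have hb : Submodule.span (WeylAlg n K) (Set.range g) = ⊥ := by
    rw [Submodule.span_eq_bot]
    rintro _ ⟨i, rfl⟩
    exact hz i
  rw [hb] at hgen
  exact bot_ne_top hgen

end PartE

theorem statement_17 (n p : ℕ) (hp : 1 ≤ p) (K : Type) [Field K] [CharZero K]
    (nn : Fin p → ℕ) (hn : ∑ j, nn j = n)
    (B : Fin n → Fin p) (hBmono : Monotone B)
    (hBcard : ∀ j, (Finset.univ.filter fun i => B i = j).card = nn j)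
    (M : Type) [AddCommGroup M] [Module K M] [Module (WeylAlg n K) M]
    [IsScalarTower K (WeylAlg n K) M] [Nontrivial M]
    (m : ℕ) (g : Fin m → M)
    (hgen : Submodule.span (WeylAlg n K) (Set.range g) = ⊤) :
    ∃ φ : MvPolynomial (Fin p) ℚ, IsNumerical φ ∧
      (∃ s : Fin p → ℤ, ∀ r : Fin p → ℤ, (∀ i, s i ≤ r i) →
        MvPolynomial.eval (fun i => (r i : ℚ)) φ =
          (Module.finrank K (modFilB n p K B M m g r) : ℚ)) ∧
      (∀ i, nn i ≤ φ.degreeOf i ∧ φ.degreeOf i ≤ 2 * nn i) ∧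
      n ≤ φ.totalDegree ∧ φ.totalDegree ≤ 2 * n := by 
  obtain ⟨φ, hup, s, hs⟩ := (wrep n K M).exists_poly B g nn hBcard
  have hmain : ∀ r : Fin p → ℤ, (∀ i, (s i : ℤ) ≤ r i) →
        MvPolynomial.eval (fun i => (r i : ℚ)) φ =
          (Module.finrank K (modFilB n p K B M m g r) : ℚ) := by
    intro r hr
    obtain ⟨t, rfl⟩ : ∃ t : Fin p → ℕ, r = fun j => (t j : ℤ) :=
      ⟨fun j => (r j).toNat, funext fun j => by have := hr j; dsimp only; omega⟩
    rw [modFilB_eq]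
    have := hs t (fun i => Int.ofNat_le.mp (hr i))
    simpa using this
  have hlow := (wrep n K M).lower B g nn hBcard s (wrep_fil_ne_bot B g hgen s) φ hs
  refine ⟨φ, ⟨fun i => s i, fun r hr => ⟨_, by rw [hmain r hr]; exact (Int.cast_natCast _).symm⟩⟩,
    ⟨fun i => s i, hmain⟩, fun i => ⟨?_, hup i⟩, ?_, ?_⟩
  · have := hlow {i} (φ.degreeOf i) (fun e he => by
      simpa using le_degreeOf_of_mem_support i he)
    simpa using this
  · have := hlow Finset.univ φ.totalDegree (fun e he => by
      have := le_totalDegree he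
      rwa [Finsupp.sum_fintype _ _ (fun _ => rfl)] at this)
    rwa [hn] at this
  · rw [totalDegree]
    refine Finset.sup_le fun e he => ?_
    rw [Finsupp.sum_fintype _ _ (fun _ => rfl), ← hn, Finset.mul_sum]
    exact Finset.sum_le_sum fun i _ => (le_degreeOf_of_mem_support i he).trans (hup i)
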